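/- arXiv:1411.5662 — 3 statements merged into one kernel-verified Lean document; each statement's English description precedes it below -/
import Mathlib

section
/- Let π be a right-angled Artin group with defining graph Γ. Then Hom_Λ(H¹(π; Λ), Λ) ≠ 0 if and only if Γ is disconnected and contains at least one edge. -/
open Finset

/-- The integral group ring `ℤ[π]`. -/
abbrev GroupRing (π : Type) [Group π] : Type := MonoidAlgebra ℤ π

variable (π : Type) [Group π]

/-- The differential of the inhomogeneous cochain complex computing the group cohomology
`H^*(π; M)` of a left `ℤ[π]`-module `M`. -/
noncomputable def cochainD (M : Type) [AddCommGroup M] [Module (GroupRing π) M] (n : ℕ) :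
    ((Fin n → π) → M) →+ ((Fin (n + 1) → π) → M) where
  toFun f g := (MonoidAlgebra.single (g 0) (1 : ℤ)) • f (fun i => g i.succ)
      + ∑ j : Fin (n + 1), ((-1 : ℤ) ^ ((j : ℕ) + 1)) • f (Fin.contractNth j (· * ·) g)
  map_zero' := by
    funext g; simp
  map_add' f₁ f₂ := by
    funext g
    simp only [Pi.add_apply, smul_add, Finset.sum_add_distrib]
    abel

/-- Inhomogeneous `n`-cocycles. -/
noncomputable def cocyclesGen (M : Type) [AddCommGroup M] [Module (GroupRing π) M] (n : ℕ) :
    AddSubgroup ((Fin n → π) → M) :=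
  (cochainD π M n).ker

/-- Inhomogeneous `n`-coboundaries. -/
noncomputable def coboundariesGen (M : Type) [AddCommGroup M] [Module (GroupRing π) M] :
    (n : ℕ) → AddSubgroup ((Fin n → π) → M)
  | 0 => ⊥
  | (n + 1) => (cochainD π M n).range

/-- The group cohomology `H^n(π; M)`, as an abelian group. -/
noncomputable def groupCoh (M : Type) [AddCommGroup M] [Module (GroupRing π) M] (n : ℕ) : Type :=
  (cocyclesGen π M n) ⧸ ((coboundariesGen π M n).addSubgroupOf (cocyclesGen π M n))

noncomputable instance (M : Type) [AddCommGroup M] [Module (GroupRing π) M] (n : ℕ) :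
    AddCommGroup (groupCoh π M n) := by
  unfold groupCoh; infer_instance

/-- `cd π ≤ n` : the cohomological dimension of `π` is at most `n`, i.e. `H^i(π; M) = 0`
for all `i > n` and all `ℤ[π]`-modules `M`. -/
def cdLE (n : ℕ) : Prop :=
  ∀ (M : Type) (_ : AddCommGroup M) (_ : Module (GroupRing π) M) (i : ℕ), n < i →
    Subsingleton (groupCoh π M i)

/-- `π` is a finitely presented group. -/
def IsFinitelyPresented : Prop :=
  ∃ (m : ℕ) (rels : Finset (FreeGroup (Fin m))),
    Nonempty (PresentedGroup (rels : Set (FreeGroup (Fin m))) ≃* π)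

/-- The cochain differential with group ring coefficients is right `ℤ[π]`-linear
(where right modules are left modules over the opposite ring). -/
noncomputable def cochainDOp (n : ℕ) :
    ((Fin n → π) → GroupRing π) →ₗ[(GroupRing π)ᵐᵒᵖ] ((Fin (n + 1) → π) → GroupRing π) where
  toFun := cochainD π (GroupRing π) n
  map_add' := (cochainD π (GroupRing π) n).map_add
  map_smul' a f := by
    funext g
    simp only [cochainD, AddMonoidHom.coe_mk, ZeroHom.coe_mk, Pi.smul_apply,
      MulOpposite.smul_eq_mul_unop, smul_eq_mul, RingHom.id_apply]
    rw [add_mul, Finset.sum_mul, ← mul_assoc]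
    congr 1
    refine Finset.sum_congr rfl fun j _ => ?_
    rw [smul_mul_assoc]

/-- Cocycles with group ring coefficients, as a right `ℤ[π]`-submodule. -/
noncomputable def cocyclesΛ (n : ℕ) :
    Submodule (GroupRing π)ᵐᵒᵖ ((Fin n → π) → GroupRing π) :=
  LinearMap.ker (cochainDOp π n)

/-- Coboundaries with group ring coefficients, as a right `ℤ[π]`-submodule. -/
noncomputable def coboundariesΛ :
    (n : ℕ) → Submodule (GroupRing π)ᵐᵒᵖ ((Fin n → π) → GroupRing π)
  | 0 => ⊥
  | (n + 1) => LinearMap.range (cochainDOp π n)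

/-- The group cohomology `H^n(π; ℤ[π])` with group ring coefficients,
as a right `ℤ[π]`-module. -/
noncomputable def groupCohΛ (n : ℕ) : Type :=
  (cocyclesΛ π n) ⧸ ((coboundariesΛ π n).comap (cocyclesΛ π n).subtype)

noncomputable instance (n : ℕ) : AddCommGroup (groupCohΛ π n) := by
  unfold groupCohΛ; infer_instance

noncomputable instance (n : ℕ) : Module (GroupRing π)ᵐᵒᵖ (groupCohΛ π n) := by
  unfold groupCohΛ; infer_instance

/-- The commutator relations defining a right-angled Artin group: one commutator
`[v, w] = v w v⁻¹ w⁻¹` for each edge `{v, w}` of the defining graph. -/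
def raagRels (V : Type) (Γ : SimpleGraph V) : Set (FreeGroup V) :=
  {r | ∃ v w : V, Γ.Adj v w ∧
    r = FreeGroup.of v * FreeGroup.of w * (FreeGroup.of v)⁻¹ * (FreeGroup.of w)⁻¹}

/-- The right-angled Artin group defined by the simplicial graph `Γ`. -/
def RAAGroup (V : Type) (Γ : SimpleGraph V) : Type := PresentedGroup (raagRels V Γ)

instance (V : Type) (Γ : SimpleGraph V) : Group (RAAGroup V Γ) :=
  inferInstanceAs (Group (PresentedGroup (raagRels V Γ)))

/-- The generator of a right-angled Artin group corresponding to a vertex. -/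
def RAAGroup.of {V : Type} {Γ : SimpleGraph V} (v : V) : RAAGroup V Γ :=
  PresentedGroup.of v

section GroupRing

variable {π}

/-- A finitely supported element of `ℤ[Q]` fixed by a permutation all of whose orbits are infinite
vanishes. -/
theorem eq_zero_of_mapDomain_eq_self {Q : Type} (σ : Equiv.Perm Q)
    (hσ : ∀ (q : Q) (n : ℕ), 0 < n → (σ ^ n) q ≠ q) (p : MonoidAlgebra ℤ Q)
    (h : MonoidAlgebra.mapDomain σ p = p) : p = 0 := by
  have step : ∀ q, p.coeff (σ q) = p.coeff q := fun q => by
    conv_lhs => rw [← h]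
    exact Finsupp.mapDomain_apply σ.injective _ _
  have iter : ∀ (n : ℕ) (q : Q), p.coeff ((σ ^ n) q) = p.coeff q := by
    intro n
    induction n with
    | zero => simp
    | succ n ih => intro q; rw [pow_succ', Equiv.Perm.mul_apply, step, ih]
  ext q
  by_contra hq
  have inj : Function.Injective fun n : ℕ => (σ ^ n) q := by
    intro m n hmn
    by_contra hne
    wlog hlt : m < n generalizing m n
    · exact this hmn.symm (Ne.symm hne) (by omega)
    refine hσ q (n - m) (by omega) ((σ ^ m).injective ?_)
    rw [← Equiv.Perm.mul_apply, ← pow_add, Nat.add_sub_cancel' hlt.le]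
    exact hmn.symm
  refine Set.infinite_of_injective_forall_mem inj (fun n => ?_) p.coeff.support.finite_toSet
  simpa [iter] using hq

theorem mapDomain_single_mul {Q : Type} (q : π → Q) (σ : Equiv.Perm Q) (w : π)
    (hq : ∀ g, q (w * g) = σ (q g)) (x : GroupRing π) :
    MonoidAlgebra.mapDomain q (MonoidAlgebra.single w (1 : ℤ) * x) =
      MonoidAlgebra.mapDomain σ (MonoidAlgebra.mapDomain q x) := by
  induction x using MonoidAlgebra.induction_linear with
  | zero => simp
  | add x y hx hy => simp [mul_add, MonoidAlgebra.mapDomain_add, hx, hy]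
  | single g r => simp [MonoidAlgebra.mapDomain_single, hq]

theorem eq_zero_of_single_sub_one_mul_eq_zero {v : π} (hv : ∀ n : ℕ, 0 < n → v ^ n ≠ 1)
    {x : GroupRing π} (h : (MonoidAlgebra.single v (1 : ℤ) - 1) * x = 0) : x = 0 := by
  refine eq_zero_of_mapDomain_eq_self (Equiv.mulLeft v) (fun q n hn hq => hv n hn ?_) x ?_
  · simpa [Equiv.pow_mulLeft] using hq
  · have := mapDomain_single_mul id (Equiv.mulLeft v) v (fun _ => rfl) x
    rw [sub_mul, one_mul, sub_eq_zero] at h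
    have hid : ∀ y : GroupRing π, MonoidAlgebra.mapDomain id y = y := fun y =>
      MonoidAlgebra.ext Finsupp.mapDomain_id
    rwa [hid, hid, h, eq_comm] at this

theorem exists_single_zpow_sub_one_eq (v : π) (n : ℤ) : ∃ a : GroupRing π,
    MonoidAlgebra.single (v ^ n) (1 : ℤ) - 1 = (MonoidAlgebra.single v 1 - 1) * a := by
  have key : ∀ k : ℤ, MonoidAlgebra.single (v ^ (k + 1)) (1 : ℤ) =
      MonoidAlgebra.single v 1 * MonoidAlgebra.single (v ^ k) 1 := fun k => by
    rw [MonoidAlgebra.single_mul_single, ← zpow_one_add, add_comm, one_mul]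
  induction n using Int.induction_on with
  | zero => exact ⟨0, by simp [MonoidAlgebra.one_def]⟩
  | succ k ih =>
    obtain ⟨a, ha⟩ := ih
    refine ⟨MonoidAlgebra.single (v ^ (k : ℤ)) 1 + a, ?_⟩
    rw [mul_add, ← ha, key, sub_mul, one_mul]
    abel
  | pred k ih =>
    obtain ⟨a, ha⟩ := ih
    refine ⟨a - MonoidAlgebra.single (v ^ (-(k : ℤ) - 1)) 1, ?_⟩
    have := key (-(k : ℤ) - 1)
    rw [sub_add_cancel] at this
    rw [mul_sub, ← ha, this, sub_mul, one_mul]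
    abel

/-- The kernel of `ℤ[π] → ℤ[⟨v⟩\π]` is contained in the right ideal generated by `v - 1`. -/
theorem exists_eq_single_sub_one_mul_of_mapDomain_eq_zero (v : π) (x : GroupRing π)
    (hx : MonoidAlgebra.mapDomain
      (Quotient.mk (QuotientGroup.rightRel (Subgroup.zpowers v))) x = 0) :
    ∃ a : GroupRing π, x = (MonoidAlgebra.single v 1 - 1) * a := by
  have key : ∀ y : GroupRing π, ∃ a, y - MonoidAlgebra.mapDomain Quotient.out
      (MonoidAlgebra.mapDomain (Quotient.mk (QuotientGroup.rightRel (Subgroup.zpowers v))) y) =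
        (MonoidAlgebra.single v 1 - 1) * a := by
    intro y
    induction y using MonoidAlgebra.induction_linear with
    | zero => exact ⟨0, by simp⟩
    | add y z hy hz =>
      obtain ⟨a, ha⟩ := hy
      obtain ⟨b, hb⟩ := hz
      refine ⟨a + b, ?_⟩
      rw [mul_add, ← ha, ← hb, MonoidAlgebra.mapDomain_add, MonoidAlgebra.mapDomain_add]
      abel
    | single g r =>
      set s := (Quotient.mk (QuotientGroup.rightRel (Subgroup.zpowers v)) g).out with hs
      have hrel : QuotientGroup.rightRel (Subgroup.zpowers v) s g :=
        Quotient.exact (Quotient.out_eq _)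
      obtain ⟨n, hn⟩ := QuotientGroup.rightRel_apply.1 hrel
      obtain ⟨a, ha⟩ := exists_single_zpow_sub_one_eq v n
      refine ⟨a * MonoidAlgebra.single s r, ?_⟩
      rw [← mul_assoc, ← ha, sub_mul, one_mul, MonoidAlgebra.single_mul_single, one_mul,
        MonoidAlgebra.mapDomain_single, MonoidAlgebra.mapDomain_single, ← hs]
      simp only at hn
      rw [hn, inv_mul_cancel_right]
  obtain ⟨a, ha⟩ := key x
  exact ⟨a, by rw [← ha, hx]; simp⟩

theorem exists_eq_single_sub_one_mul {v w : π} (hvw : Commute v w)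
    (hfree : ∀ n : ℕ, 0 < n → w ^ n ∉ Subgroup.zpowers v) {x y : GroupRing π}
    (h : (MonoidAlgebra.single v (1 : ℤ) - 1) * y = (MonoidAlgebra.single w 1 - 1) * x) :
    ∃ a : GroupRing π, x = (MonoidAlgebra.single v 1 - 1) * a := by
  apply exists_eq_single_sub_one_mul_of_mapDomain_eq_zero
  set R := QuotientGroup.rightRel (Subgroup.zpowers v)
  have comm : ∀ u : π, Commute v u → ∀ a b : π, R a b ↔ R (u * a) (u * b) := by
    intro u hu a b
    have hconj : u * b * (u * a)⁻¹ = u * (b * a⁻¹) * u⁻¹ := by group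
    rw [QuotientGroup.rightRel_apply, QuotientGroup.rightRel_apply, hconj]
    constructor
    · rintro ⟨n, hn⟩
      refine ⟨n, ?_⟩
      simp only at hn ⊢
      rw [← hn, eq_mul_inv_iff_mul_eq]
      exact (hu.zpow_left n).eq
    · rintro ⟨n, hn⟩
      refine ⟨n, ?_⟩
      simp only at hn ⊢
      rw [eq_mul_inv_iff_mul_eq, (hu.zpow_left n).eq] at hn
      exact mul_left_cancel hn
  let σ : Equiv.Perm (Quotient R) := Quotient.congr (Equiv.mulLeft w) (comm w hvw)
  refine eq_zero_of_mapDomain_eq_self σ ?_ _ ?_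
  · intro q n hn hq
    induction q using Quotient.inductionOn with
    | h g =>
      have hpow : ∀ m : ℕ, (σ ^ m) (Quotient.mk R g) = Quotient.mk R (w ^ m * g) := by
        intro m
        induction m with
        | zero => simp
        | succ m ih =>
          rw [pow_succ', Equiv.Perm.mul_apply, ih, pow_succ', mul_assoc]
          rfl
      rw [hpow] at hq
      have := QuotientGroup.rightRel_apply.1 (Quotient.exact hq.symm)
      rw [mul_inv_cancel_right] at this
      exact hfree n hn this
  · rw [← mapDomain_single_mul (Quotient.mk R) σ w (fun _ => rfl)]
    have hv := mapDomain_single_mul (Quotient.mk R) (Equiv.refl _) v (fun g => by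
      refine Quotient.sound (QuotientGroup.rightRel_apply.2 ?_)
      simp) y
    have hid : ∀ z : MonoidAlgebra ℤ (Quotient R),
        MonoidAlgebra.mapDomain (Equiv.refl (Quotient R)) z = z := fun z =>
      MonoidAlgebra.ext Finsupp.mapDomain_id
    rw [hid] at hv
    have hw : MonoidAlgebra.single w (1 : ℤ) * x =
        x + (MonoidAlgebra.single v (1 : ℤ) - 1) * y := by
      rw [h, sub_mul, one_mul]; abel
    have hsub : MonoidAlgebra.single v (1 : ℤ) * y =
        y + (MonoidAlgebra.single v (1 : ℤ) - 1) * y := by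
      rw [sub_mul, one_mul]; abel
    rw [hsub, MonoidAlgebra.mapDomain_add, add_eq_left] at hv
    rw [hw, MonoidAlgebra.mapDomain_add, hv, add_zero]

end GroupRing

section Cocycles

variable {π}

/-- A crossed homomorphism `π → ℤ[π]`. -/
def IsCrossedHom (d : π → GroupRing π) : Prop :=
  ∀ g h, d (g * h) = d g + MonoidAlgebra.single g 1 * d h

theorem IsCrossedHom.map_one {d : π → GroupRing π} (hd : IsCrossedHom d) : d 1 = 0 := by
  have := hd 1 1
  rwa [← MonoidAlgebra.one_def, one_mul, one_mul, left_eq_add] at this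

theorem IsCrossedHom.map_inv {d : π → GroupRing π} (hd : IsCrossedHom d) (g : π) :
    d g⁻¹ = -(MonoidAlgebra.single g⁻¹ 1 * d g) := by
  have := hd g⁻¹ g
  rw [inv_mul_cancel, hd.map_one] at this
  exact eq_neg_of_add_eq_zero_left this.symm

/-- Crossed homomorphisms agreeing on a generating set are equal. -/
theorem IsCrossedHom.eq_of_eqOn {d e : π → GroupRing π} (hd : IsCrossedHom d)
    (he : IsCrossedHom e) {s : Set π} (hs : Subgroup.closure s = ⊤) (h : Set.EqOn d e s) :
    d = e := by
  funext g
  have hg : g ∈ Subgroup.closure s := hs ▸ Subgroup.mem_top g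
  induction hg using Subgroup.closure_induction with
  | mem x hx => exact h hx
  | one => rw [hd.map_one, he.map_one]
  | mul x y _ _ hx hy => rw [hd, he, hx, hy]
  | inv x _ hx => rw [hd.map_inv, he.map_inv, hx]

theorem isCrossedHom_principal (a : GroupRing π) :
    IsCrossedHom fun g => (MonoidAlgebra.single g 1 - 1) * a := by
  intro g h
  have : MonoidAlgebra.single (g * h) (1 : ℤ) =
      MonoidAlgebra.single g 1 * MonoidAlgebra.single h 1 := by simp
  simp only [this]
  noncomm_ring

theorem mem_cocyclesΛ_one_iff {c : (Fin 1 → π) → GroupRing π} :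
    c ∈ cocyclesΛ π 1 ↔ IsCrossedHom fun g => c fun _ => g := by
  have h0 : ∀ g : Fin 2 → π, Fin.contractNth 0 (· * ·) g = fun _ => g 0 * g 1 := fun g => by
    funext i; fin_cases i; simp [Fin.contractNth]
  have h1 : ∀ g : Fin 2 → π, Fin.contractNth 1 (· * ·) g = fun _ => g 0 := fun g => by
    funext i; fin_cases i; simp [Fin.contractNth]
  have hd : ∀ g : Fin 2 → π, cochainDOp π 1 c g =
      MonoidAlgebra.single (g 0) 1 * c (fun _ => g 1) - c (fun _ => g 0 * g 1)
        + c (fun _ => g 0) := fun g => by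
    have hs : (fun i : Fin 1 => g i.succ) = fun _ => g 1 := by
      funext i; fin_cases i; rfl
    simp only [cochainDOp, cochainD, LinearMap.coe_mk, AddHom.coe_mk, AddMonoidHom.coe_mk,
      ZeroHom.coe_mk, hs, smul_eq_mul]
    rw [Fin.sum_univ_two, h0, h1]
    simp only [Fin.val_zero, Fin.val_one, zero_add, pow_one, one_add_one_eq_two, even_two,
      Even.neg_pow, one_pow, neg_smul, one_smul]
    abel
  rw [cocyclesΛ, LinearMap.mem_ker]
  constructor
  · intro h g k
    have := (hd ![g, k]).symm.trans (congrFun h ![g, k])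
    simp only [Matrix.cons_val_zero, Matrix.cons_val_one, Pi.zero_apply] at this
    rw [← sub_eq_zero, ← neg_eq_zero, ← this]
    abel
  · intro h
    funext g
    have := h (g 0) (g 1)
    simp only at this
    rw [hd, this, Pi.zero_apply]
    abel

theorem mem_coboundariesΛ_one_iff {c : (Fin 1 → π) → GroupRing π} :
    c ∈ coboundariesΛ π 1 ↔
      ∃ a, (fun g => c fun _ => g) = fun g => (MonoidAlgebra.single g 1 - 1) * a := by
  have hd : ∀ (f : (Fin 0 → π) → GroupRing π) (g : Fin 1 → π), cochainDOp π 0 f g =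
      (MonoidAlgebra.single (g 0) 1 - 1) * f default := fun f g => by
    simp only [cochainDOp, cochainD, LinearMap.coe_mk, AddHom.coe_mk, AddMonoidHom.coe_mk,
      ZeroHom.coe_mk, smul_eq_mul, Subsingleton.elim _ (default : Fin 0 → π), sub_mul]
    simp [sub_eq_add_neg]
  constructor
  · rintro ⟨f, rfl⟩
    exact ⟨f default, funext fun g => hd f _⟩
  · rintro ⟨a, ha⟩
    refine ⟨fun _ => a, funext fun g => ?_⟩
    rw [hd, ← congrFun ha (g 0)]
    congr 1
    funext i; fin_cases i; rfl

/-- The `1`-cocycle attached to a crossed homomorphism. -/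
noncomputable def IsCrossedHom.cocycle {d : π → GroupRing π} (hd : IsCrossedHom d) :
    cocyclesΛ π 1 :=
  ⟨fun g => d (g 0), mem_cocyclesΛ_one_iff.2 hd⟩

variable (π) in
/-- The projection of the `1`-cocycles onto `H¹(π; ℤ[π])`. -/
noncomputable def toGroupCohΛ : cocyclesΛ π 1 →ₗ[(GroupRing π)ᵐᵒᵖ] groupCohΛ π 1 :=
  Submodule.mkQ _

theorem toGroupCohΛ_surjective : Function.Surjective (toGroupCohΛ π) :=
  Submodule.mkQ_surjective _

theorem toGroupCohΛ_eq_zero_iff (c : cocyclesΛ π 1) :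
    toGroupCohΛ π c = 0 ↔
      ∃ a, (fun g => c.1 fun _ => g) = fun g => (MonoidAlgebra.single g 1 - 1) * a :=
  (Submodule.Quotient.mk_eq_zero _).trans mem_coboundariesΛ_one_iff

end Cocycles

namespace RAAGroup

variable {V : Type} {Γ : SimpleGraph V}

theorem closure_range_of :
    Subgroup.closure (Set.range (RAAGroup.of : V → RAAGroup V Γ)) = ⊤ :=
  PresentedGroup.closure_range_of _

theorem commute_of_adj {v w : V} (h : Γ.Adj v w) :
    Commute (RAAGroup.of v : RAAGroup V Γ) (RAAGroup.of w) := by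
  have := PresentedGroup.one_of_mem (rels := raagRels V Γ) ⟨v, w, h, rfl⟩
  simp only [map_mul, map_inv] at this
  rw [mul_inv_eq_one, mul_inv_eq_iff_eq_mul] at this
  exact this

theorem commute_single_of_adj {v w : V} (h : Γ.Adj v w) :
    Commute (MonoidAlgebra.single (RAAGroup.of v) 1 : GroupRing (RAAGroup V Γ))
      (MonoidAlgebra.single (RAAGroup.of w) 1) := by
  simp [commute_iff_eq, (commute_of_adj h).eq]

theorem commute_of_sub_one_of_adj {v w : V} (h : Γ.Adj v w) :
    Commute (MonoidAlgebra.single (RAAGroup.of v) 1 - 1 : GroupRing (RAAGroup V Γ))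
      (MonoidAlgebra.single (RAAGroup.of w) 1 - 1) :=
  ((commute_single_of_adj h).sub_left (Commute.one_left _)).sub_right (Commute.one_right _)

/-- The homomorphism to a group determined by images of the generators that commute along edges. -/
def lift {G : Type} [Group G] (f : V → G) (hf : ∀ v w, Γ.Adj v w → Commute (f v) (f w)) :
    RAAGroup V Γ →* G :=
  PresentedGroup.toGroup (f := f) (rels := raagRels V Γ) (by
    rintro _ ⟨v, w, h, rfl⟩
    simp [(hf v w h).eq])

@[simp]
theorem lift_of {G : Type} [Group G] (f : V → G)
    (hf : ∀ v w, Γ.Adj v w → Commute (f v) (f w)) (v : V) :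
    lift (Γ := Γ) f hf (RAAGroup.of v) = f v :=
  PresentedGroup.toGroup.of _

theorem pow_of_ne_one (v : V) (n : ℕ) (hn : 0 < n) : (RAAGroup.of v : RAAGroup V Γ) ^ n ≠ 1 := by
  intro h
  have := congrArg
    (lift (fun _ => Multiplicative.ofAdd (1 : ℤ)) (fun _ _ _ => Commute.all _ _)) h
  rw [map_pow, lift_of, MonoidHom.map_one, ← ofAdd_nsmul, ofAdd_eq_one] at this
  simp at this
  omega

theorem pow_of_notMem_zpowers {v w : V} (hvw : v ≠ w) (n : ℕ) (hn : 0 < n) :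
    (RAAGroup.of w : RAAGroup V Γ) ^ n ∉ Subgroup.zpowers (RAAGroup.of v) := by
  classical
  rintro ⟨m, hm⟩
  have := congrArg (lift (fun x => Multiplicative.ofAdd (if x = w then (1 : ℤ) else 0))
    (fun _ _ _ => Commute.all _ _)) hm
  simp only [map_zpow, map_pow, lift_of, if_neg hvw, if_true] at this
  rw [ofAdd_zero, one_zpow, ← ofAdd_nsmul, eq_comm, ofAdd_eq_one] at this
  simp at this
  omega

theorem eq_zero_of_of_sub_one_mul_eq_zero (v : V) {x : GroupRing (RAAGroup V Γ)}
    (h : (MonoidAlgebra.single (RAAGroup.of v) (1 : ℤ) - 1) * x = 0) : x = 0 :=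
  eq_zero_of_single_sub_one_mul_eq_zero (pow_of_ne_one v) h

theorem of_sub_one_mul_cancel (v : V) {x y : GroupRing (RAAGroup V Γ)}
    (h : (MonoidAlgebra.single (RAAGroup.of v) (1 : ℤ) - 1) * x =
      (MonoidAlgebra.single (RAAGroup.of v) 1 - 1) * y) : x = y :=
  sub_eq_zero.1 (eq_zero_of_of_sub_one_mul_eq_zero v (by rw [mul_sub, h, sub_self]))

/-- The affine permutation `x ↦ g x + t` of the group ring. -/
noncomputable def affinePerm {π : Type} [Group π] (g : π) (t : GroupRing π) :
    Equiv.Perm (GroupRing π) where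
  toFun x := MonoidAlgebra.single g 1 * x + t
  invFun y := MonoidAlgebra.single g⁻¹ 1 * (y - t)
  left_inv x := by
    simp only
    rw [add_sub_cancel_right, ← mul_assoc, MonoidAlgebra.single_mul_single]
    simp [← MonoidAlgebra.one_def]
  right_inv y := by
    simp only
    rw [← mul_assoc, MonoidAlgebra.single_mul_single]
    simp [← MonoidAlgebra.one_def]

/-- A crossed homomorphism is freely determined by its values on the generators, subject to the
condition imposed by the edges. -/
theorem exists_isCrossedHom (t : V → GroupRing (RAAGroup V Γ))
    (ht : ∀ v w, Γ.Adj v w → (MonoidAlgebra.single (RAAGroup.of v) (1 : ℤ) - 1) * t w =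
      (MonoidAlgebra.single (RAAGroup.of w) 1 - 1) * t v) :
    ∃ d : RAAGroup V Γ → GroupRing (RAAGroup V Γ),
      IsCrossedHom d ∧ ∀ v, d (RAAGroup.of v) = t v := by
  let ρ : RAAGroup V Γ →* Equiv.Perm (GroupRing (RAAGroup V Γ)) :=
    lift (fun v => affinePerm (RAAGroup.of v) (t v)) (by
      intro v w h
      refine Equiv.ext fun x => ?_
      have hc := (commute_single_of_adj h).eq
      have h2 := ht v w h
      rw [sub_mul, sub_mul, one_mul, one_mul, sub_eq_iff_eq_add] at h2
      simp only [affinePerm, Equiv.Perm.mul_apply, Equiv.coe_fn_mk, mul_add, ← mul_assoc, hc, h2]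
      abel)
  have hρ : ∀ g x, ρ g x = MonoidAlgebra.single g 1 * x + ρ g 0 := by
    intro g
    have hg : g ∈ Subgroup.closure (Set.range (RAAGroup.of : V → RAAGroup V Γ)) :=
      closure_range_of ▸ Subgroup.mem_top g
    induction hg using Subgroup.closure_induction with
    | mem x hx =>
      obtain ⟨v, rfl⟩ := hx
      intro x
      simp [ρ, affinePerm]
    | one => intro x; simp [← MonoidAlgebra.one_def]
    | mul g h _ _ hg hh =>
      intro x
      rw [map_mul, Equiv.Perm.mul_apply, Equiv.Perm.mul_apply, hg, hh, hg (ρ h 0), mul_add,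
        ← mul_assoc, MonoidAlgebra.single_mul_single, one_mul, add_assoc]
    | inv g _ hg =>
      intro x
      rw [map_inv, Equiv.Perm.inv_eq_iff_eq, hg, mul_add, ← mul_assoc,
        MonoidAlgebra.single_mul_single, mul_inv_cancel, one_mul, ← MonoidAlgebra.one_def, one_mul,
        add_assoc, ← hg, ← Equiv.Perm.mul_apply, mul_inv_cancel, Equiv.Perm.one_apply, add_zero]
  refine ⟨fun g => ρ g 0, fun g h => ?_, fun v => ?_⟩
  · simp only [map_mul, Equiv.Perm.mul_apply]
    rw [hρ, add_comm]
  · simp [ρ, affinePerm]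

theorem crossedHom_of_sub_one_mul_comm {d : RAAGroup V Γ → GroupRing (RAAGroup V Γ)}
    (hd : IsCrossedHom d) {v w : V} (h : Γ.Adj v w) :
    (MonoidAlgebra.single (RAAGroup.of v) (1 : ℤ) - 1) * d (RAAGroup.of w) =
      (MonoidAlgebra.single (RAAGroup.of w) 1 - 1) * d (RAAGroup.of v) := by
  have := congrArg d (commute_of_adj h).eq
  rw [hd, hd] at this
  rw [sub_mul, sub_mul, one_mul, one_mul, sub_eq_sub_iff_add_eq_add, add_comm, this, add_comm]

theorem exists_crossedHom_of_eq_of_adj {d : RAAGroup V Γ → GroupRing (RAAGroup V Γ)}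
    (hd : IsCrossedHom d) {v w : V} (h : Γ.Adj v w) :
    ∃ a, d (RAAGroup.of v) = (MonoidAlgebra.single (RAAGroup.of v) 1 - 1) * a :=
  exists_eq_single_sub_one_mul (commute_of_adj h) (pow_of_notMem_zpowers h.ne)
    (crossedHom_of_sub_one_mul_comm hd h)

theorem crossedHom_of_eq_of_adj {d : RAAGroup V Γ → GroupRing (RAAGroup V Γ)}
    (hd : IsCrossedHom d) {v w : V} (h : Γ.Adj v w) {a : GroupRing (RAAGroup V Γ)}
    (ha : d (RAAGroup.of v) = (MonoidAlgebra.single (RAAGroup.of v) 1 - 1) * a) :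
    d (RAAGroup.of w) = (MonoidAlgebra.single (RAAGroup.of w) 1 - 1) * a := by
  refine of_sub_one_mul_cancel v ?_
  rw [crossedHom_of_sub_one_mul_comm hd h, ha, ← mul_assoc, ← mul_assoc]
  rw [(commute_of_sub_one_of_adj h).eq]

/-- A connected defining graph with an edge forces `H¹(π; ℤ[π]) = 0`. -/
theorem toGroupCohΛ_eq_zero_of_connected (hΓ : Γ.Connected) {v w : V} (h : Γ.Adj v w)
    (c : cocyclesΛ (RAAGroup V Γ) 1) : toGroupCohΛ (RAAGroup V Γ) c = 0 := by
  have hd := mem_cocyclesΛ_one_iff.1 c.2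
  obtain ⟨a, ha⟩ := exists_crossedHom_of_eq_of_adj hd h
  refine (toGroupCohΛ_eq_zero_iff c).2 ⟨a, hd.eq_of_eqOn (isCrossedHom_principal a)
    closure_range_of ?_⟩
  rintro _ ⟨x, rfl⟩
  obtain ⟨p⟩ := hΓ.preconnected v x
  clear h
  induction p with
  | nil => exact ha
  | cons hadj _ ih => exact ih (crossedHom_of_eq_of_adj hd hadj ha)

/-- The augmentation ideal of a free group is free on the elements `x_v - 1`. -/
theorem eq_zero_of_sum_mul_of_sub_one_eq_zero [Fintype V] (hΓ : ∀ v w, ¬ Γ.Adj v w)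
    (b : V → GroupRing (RAAGroup V Γ))
    (hb : ∑ v, b v * (MonoidAlgebra.single (RAAGroup.of v) (1 : ℤ) - 1) = 0) (v : V) :
    b v = 0 := by
  classical
  obtain ⟨d, hd, hdv⟩ := exists_isCrossedHom (Γ := Γ) (fun w => if w = v then 1 else 0)
    (fun _ _ h => (hΓ _ _ h).elim)
  let D : GroupRing (RAAGroup V Γ) →+ GroupRing (RAAGroup V Γ) :=
    (Finsupp.liftAddHom fun g => (AddMonoidHom.mulLeft (d g)).comp
      (Int.castAddHom (GroupRing (RAAGroup V Γ)))).comp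
      (MonoidAlgebra.coeffAddEquiv.toAddMonoidHom)
  have hDs : ∀ g r, D (MonoidAlgebra.single g r) = d g * (r : GroupRing (RAAGroup V Γ)) :=
    fun g r => by simp [D]
  have hD : ∀ x w, D (x * (MonoidAlgebra.single (RAAGroup.of w) 1 - 1)) =
      x * d (RAAGroup.of w) := by
    intro x w
    induction x using MonoidAlgebra.induction_linear with
    | zero => simp
    | add x y hx hy => rw [add_mul, map_add, hx, hy, add_mul]
    | single g r =>
      have hr : MonoidAlgebra.single g r =
          MonoidAlgebra.single g 1 * (r : GroupRing (RAAGroup V Γ)) := by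
        rw [← zsmul_eq_mul', MonoidAlgebra.smul_single, smul_eq_mul, mul_one]
      rw [mul_sub, mul_one, map_sub, MonoidAlgebra.single_mul_single, mul_one, hDs, hDs, hd,
        add_mul, add_sub_cancel_left, hr, mul_assoc, mul_assoc, (Int.cast_commute r _).eq]
  have := congrArg D hb
  simpa [map_sum, hD, hdv] using this

/-- For an edgeless defining graph, every functional on `H¹(π; ℤ[π])` vanishes. -/
theorem dual_eq_zero_of_forall_not_adj [Fintype V] (hΓ : ∀ v w, ¬ Γ.Adj v w)
    (f : groupCohΛ (RAAGroup V Γ) 1 →ₗ[(GroupRing (RAAGroup V Γ))ᵐᵒᵖ] GroupRing (RAAGroup V Γ)) :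
    f = 0 := by
  classical
  choose d hd hdv using fun v : V => exists_isCrossedHom (Γ := Γ)
    (fun w => if w = v then 1 else 0) (fun _ _ h => (hΓ _ _ h).elim)
  let F := f.comp (toGroupCohΛ (RAAGroup V Γ))
  have hF : ∀ c : cocyclesΛ (RAAGroup V Γ) 1,
      F c = ∑ v, F (hd v).cocycle * c.1 fun _ => RAAGroup.of v := by
    intro c
    have hc : c = ∑ v, MulOpposite.op (c.1 fun _ => RAAGroup.of v) • (hd v).cocycle := by
      have heq := (mem_cocyclesΛ_one_iff.1 c.2).eq_of_eqOn (mem_cocyclesΛ_one_iff.1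
        (∑ v, MulOpposite.op (c.1 fun _ => RAAGroup.of v) • (hd v).cocycle).2) closure_range_of
        (by
          rintro _ ⟨w, rfl⟩
          simp [IsCrossedHom.cocycle, hdv])
      ext1
      funext g
      have hg : g = fun _ => g 0 := by funext i; fin_cases i; rfl
      rw [hg]
      exact congrFun heq (g 0)
    conv_lhs => rw [hc]
    simp [map_sum]
  have hzero : ∀ v, F (hd v).cocycle = 0 := by
    refine eq_zero_of_sum_mul_of_sub_one_eq_zero hΓ _ ?_
    have hp : F (isCrossedHom_principal (1 : GroupRing (RAAGroup V Γ))).cocycle = 0 := by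
      have := (toGroupCohΛ_eq_zero_iff
        (isCrossedHom_principal (1 : GroupRing (RAAGroup V Γ))).cocycle).2 ⟨1, rfl⟩
      rw [LinearMap.comp_apply, this, map_zero]
    rw [hF] at hp
    simpa [IsCrossedHom.cocycle] using hp
  refine LinearMap.ext fun x => ?_
  obtain ⟨c, rfl⟩ := toGroupCohΛ_surjective x
  have := hF c
  simp only [hzero, zero_mul, Finset.sum_const_zero] at this
  simpa [F] using this

/-- If `v` lies on an edge, a class in `H¹(π; ℤ[π])` has a unique representative vanishing at `v`;
evaluating that representative at `u` is a functional. -/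
theorem exists_dual_of_adj {v w : V} (h : Γ.Adj v w) (u : V) :
    ∃ f : groupCohΛ (RAAGroup V Γ) 1 →ₗ[(GroupRing (RAAGroup V Γ))ᵐᵒᵖ] GroupRing (RAAGroup V Γ),
      ∀ (d : RAAGroup V Γ → GroupRing (RAAGroup V Γ)) (hd : IsCrossedHom d),
        d (RAAGroup.of v) = 0 → f (toGroupCohΛ _ hd.cocycle) = d (RAAGroup.of u) := by
  choose a ha using fun c : cocyclesΛ (RAAGroup V Γ) 1 =>
    exists_crossedHom_of_eq_of_adj (mem_cocyclesΛ_one_iff.1 c.2) h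
  let F : cocyclesΛ (RAAGroup V Γ) 1 →ₗ[(GroupRing (RAAGroup V Γ))ᵐᵒᵖ]
      GroupRing (RAAGroup V Γ) :=
    { toFun c := (c.1 fun _ => RAAGroup.of u) -
        (MonoidAlgebra.single (RAAGroup.of u) 1 - 1) * a c
      map_add' c e := by
        have : a (c + e) = a c + a e := of_sub_one_mul_cancel v (by
          rw [← ha, mul_add, ← ha, ← ha]; rfl)
        rw [this, mul_add]
        simp only [Submodule.coe_add, Pi.add_apply]
        abel
      map_smul' r c := by
        have : a (r • c) = r • a c := of_sub_one_mul_cancel v (by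
          rw [← ha, MulOpposite.smul_eq_mul_unop, ← mul_assoc, ← ha]; rfl)
        rw [this]
        simp [MulOpposite.smul_eq_mul_unop, sub_mul, mul_assoc] }
  refine ⟨Submodule.liftQ _ F ?_, ?_⟩
  · intro c hc
    obtain ⟨b, hb⟩ := mem_coboundariesΛ_one_iff.1 hc
    have hab : a c = b := of_sub_one_mul_cancel v ((ha c).symm.trans (congrFun hb _))
    rw [LinearMap.mem_ker]
    exact sub_eq_zero.2 ((congrFun hb _).trans (by rw [hab]))
  · intro d hd hdv
    have hzero : a hd.cocycle = 0 :=
      eq_zero_of_of_sub_one_mul_eq_zero v ((ha hd.cocycle).symm.trans hdv)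
    change d (RAAGroup.of u) - _ * a hd.cocycle = _
    rw [hzero, mul_zero, sub_zero]

theorem exists_dual_ne_zero {v w : V} (h : Γ.Adj v w) (hΓ : ¬ Γ.Connected) :
    ∃ f : groupCohΛ (RAAGroup V Γ) 1 →ₗ[(GroupRing (RAAGroup V Γ))ᵐᵒᵖ] GroupRing (RAAGroup V Γ),
      f ≠ 0 := by
  classical
  obtain ⟨u, hu⟩ : ∃ u, ¬ Γ.Reachable v u := by
    by_contra! hall
    exact hΓ ((SimpleGraph.connected_iff Γ).2 ⟨fun x y => (hall x).symm.trans (hall y), ⟨v⟩⟩)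
  obtain ⟨d, hd, hdt⟩ := exists_isCrossedHom (Γ := Γ)
    (fun x => if Γ.Reachable v x then 0 else MonoidAlgebra.single (RAAGroup.of x) 1 - 1) (by
      intro x y hxy
      have hiff : Γ.Reachable v x ↔ Γ.Reachable v y :=
        ⟨fun hr => hr.trans hxy.reachable, fun hr => hr.trans hxy.symm.reachable⟩
      by_cases hr : Γ.Reachable v y
      · simp [hiff, hr]
      · simpa only [hiff, hr, if_false] using (commute_of_sub_one_of_adj hxy).eq)
  obtain ⟨f, hf⟩ := exists_dual_of_adj h u
  refine ⟨f, fun hf0 => ?_⟩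
  have := hf d hd (by rw [hdt, if_pos (SimpleGraph.Reachable.refl v)])
  rw [hf0, LinearMap.zero_apply, hdt, if_neg hu] at this
  exact one_ne_zero (eq_zero_of_of_sub_one_mul_eq_zero (Γ := Γ) u
    (x := (1 : GroupRing (RAAGroup V Γ))) (by rw [mul_one, ← this]))

end RAAGroup

/-- Let `π` be a right-angled Artin group with defining graph `Γ`. Then
`Hom_Λ(H¹(π; Λ), Λ) ≠ 0` if and only if `Γ` is disconnected and contains at least one edge. -/
theorem statement9 (V : Type) [Fintype V] [DecidableEq V] (Γ : SimpleGraph V) :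
    (∃ f : groupCohΛ (RAAGroup V Γ) 1 →ₗ[(GroupRing (RAAGroup V Γ))ᵐᵒᵖ]
        GroupRing (RAAGroup V Γ), f ≠ 0) ↔
      (¬ Γ.Connected ∧ ∃ v w : V, Γ.Adj v w) := by
  constructor
  · rintro ⟨f, hf⟩
    have hedge : ∃ v w : V, Γ.Adj v w := by
      by_contra! hno
      exact hf (RAAGroup.dual_eq_zero_of_forall_not_adj hno f)
    refine ⟨fun hconn => hf ?_, hedge⟩
    obtain ⟨v, w, h⟩ := hedge
    refine LinearMap.ext fun x => ?_
    obtain ⟨c, rfl⟩ := toGroupCohΛ_surjective x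
    rw [RAAGroup.toGroupCohΛ_eq_zero_of_connected hconn h c, map_zero, map_zero]
  · rintro ⟨hconn, v, w, h⟩
    exact RAAGroup.exists_dual_ne_zero h hconn
end

section
/- Let Λ be a ring with involution, B a right Λ-module, and s a hermitian form on B such that the dualized adjoint (ad s)* : (B*)* → B* is bijective. Then the sesquilinear form h on B* defined by h(x, y) = ((ad s)*)^{-1}(x)(y) is hermitian. -/
section RightModules

variable (Λ : Type) [Ring Λ] [StarRing Λ]

/-- The scalar action of `Λᵐᵒᵖ` on the dual `B* = Hom_Λ(B, Λ)` of a right `Λ`-module `B`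
(right `Λ`-modules are left `Λᵐᵒᵖ`-modules), given by `(v·λ)(b) = λ̄·v(b)`. -/
noncomputable def rdualSmulFun {B : Type} [AddCommGroup B] [Module Λᵐᵒᵖ B]
    (a : Λᵐᵒᵖ) (v : B →ₗ[Λᵐᵒᵖ] Λ) : B →ₗ[Λᵐᵒᵖ] Λ where
  toFun b := star a.unop * v b
  map_add' x y := by simp [mul_add]
  map_smul' c x := by simp [MulOpposite.smul_eq_mul_unop, mul_assoc]

/-- The dual `B* = Hom_Λ(B, Λ)` of a right `Λ`-module `B` is a right `Λ`-module via
`(v·λ)(b) = λ̄·v(b)`, where `λ ↦ λ̄` is the involution of `Λ`. -/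
noncomputable instance rdualModule {B : Type} [AddCommGroup B] [Module Λᵐᵒᵖ B] :
    Module Λᵐᵒᵖ (B →ₗ[Λᵐᵒᵖ] Λ) where
  smul := rdualSmulFun Λ
  one_smul v := by
    ext b; show star (1 : Λᵐᵒᵖ).unop * v b = v b; simp
  mul_smul a b v := by
    ext x
    show star (a * b).unop * v x = star a.unop * (star b.unop * v x)
    simp [star_mul, mul_assoc]
  smul_zero a := by
    ext x; show star a.unop * (0 : B →ₗ[Λᵐᵒᵖ] Λ) x = 0; simp
  smul_add a v w := by
    ext x
    show star a.unop * (v + w) x = star a.unop * v x + star a.unop * w x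
    simp [mul_add]
  add_smul a b v := by
    ext x
    show star (a + b).unop * v x = star a.unop * v x + star b.unop * v x
    simp [add_mul]
  zero_smul v := by
    ext x; show star (0 : Λᵐᵒᵖ).unop * v x = 0; simp

@[simp] lemma rdual_smul_apply {B : Type} [AddCommGroup B] [Module Λᵐᵒᵖ B]
    (a : Λᵐᵒᵖ) (v : B →ₗ[Λᵐᵒᵖ] Λ) (b : B) :
    (a • v) b = star a.unop * v b := rfl

variable (B : Type) [AddCommGroup B] [Module Λᵐᵒᵖ B]

/-- A sesquilinear form on a right `Λ`-module `B`, over a ring `Λ` with involution: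
a biadditive map `h : B × B → Λ` with `h(xλ, yμ) = λ̄·h(x, y)·μ`. -/
structure SesqForm where
  toFun : B → B → Λ
  add_left : ∀ x y z, toFun (x + y) z = toFun x z + toFun y z
  add_right : ∀ x y z, toFun x (y + z) = toFun x y + toFun x z
  smul_left : ∀ (a : Λ) (x y : B), toFun ((MulOpposite.op a) • x) y = star a * toFun x y
  smul_right : ∀ (a : Λ) (x y : B), toFun x ((MulOpposite.op a) • y) = toFun x y * a

variable {Λ B}

/-- A sesquilinear form is hermitian if it agrees with its transpose
`Th(x, y) = star (h (y, x))`. -/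
def SesqForm.IsHermitian (h : SesqForm Λ B) : Prop :=
  ∀ x y, star (h.toFun y x) = h.toFun x y

/-- The adjoint of a sesquilinear form, evaluated at `x`: the `Λ`-linear map `y ↦ h(x, y)`. -/
noncomputable def SesqForm.adRight (h : SesqForm Λ B) (x : B) : B →ₗ[Λᵐᵒᵖ] Λ where
  toFun y := h.toFun x y
  map_add' y z := h.add_right x y z
  map_smul' c y := by
    simpa [MulOpposite.smul_eq_mul_unop] using h.smul_right c.unop x y

/-- The adjoint `ad h : B → B*` of a sesquilinear form `h`, i.e. `(ad h)(x)(y) = h(x, y)`. -/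
noncomputable def SesqForm.ad (h : SesqForm Λ B) : B →ₗ[Λᵐᵒᵖ] (B →ₗ[Λᵐᵒᵖ] Λ) where
  toFun := h.adRight
  map_add' x y := by ext z; simp [SesqForm.adRight, h.add_left]
  map_smul' c x := by
    ext z
    simpa [SesqForm.adRight, rdual_smul_apply] using h.smul_left c.unop x z

/-- The dual `f* : B* → A*` of a map `f : A → B` of right `Λ`-modules. -/
noncomputable def rdualMap {A B : Type} [AddCommGroup A] [AddCommGroup B]
    [Module Λᵐᵒᵖ A] [Module Λᵐᵒᵖ B] (f : A →ₗ[Λᵐᵒᵖ] B) :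
    (B →ₗ[Λᵐᵒᵖ] Λ) →ₗ[Λᵐᵒᵖ] (A →ₗ[Λᵐᵒᵖ] Λ) where
  toFun v := v.comp f
  map_add' v w := by ext a; simp
  map_smul' c v := by ext a; simp

/-- The double-dual map `γ : B → (B*)*`, `γ(b)(v) = star (v b)`. -/
noncomputable def rgamma (Λ : Type) [Ring Λ] [StarRing Λ]
    (B : Type) [AddCommGroup B] [Module Λᵐᵒᵖ B] :
    B →ₗ[Λᵐᵒᵖ] ((B →ₗ[Λᵐᵒᵖ] Λ) →ₗ[Λᵐᵒᵖ] Λ) where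
  toFun b :=
    { toFun := fun v => star (v b)
      map_add' := fun v w => by simp
      map_smul' := fun c v => by
        simp [rdual_smul_apply, star_mul, MulOpposite.smul_eq_mul_unop] }
  map_add' x y := by ext v; simp
  map_smul' c x := by
    ext v
    simp [rdual_smul_apply, MulOpposite.smul_eq_mul_unop, star_mul]

end RightModules

/-- For a hermitian form `s`, the composite `(ad s)* ∘ γ` is `ad s`. -/
lemma SesqForm.IsHermitian.rdualMap_ad_rgamma {Λ : Type} [Ring Λ] [StarRing Λ]
    {B : Type} [AddCommGroup B] [Module Λᵐᵒᵖ B] {s : SesqForm Λ B}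
    (hs : s.IsHermitian) (b : B) :
    rdualMap s.ad (rgamma Λ B b) = s.ad b :=
  LinearMap.ext fun c => hs b c

/-- Let `Λ` be a ring with involution, `B` a right `Λ`-module, and `s` a
hermitian form on `B` such that `(ad s)* : (B*)* → B*` is bijective. Then the form
`h(x, y) = ((ad s)*)⁻¹(x)(y)` on `B*` is hermitian. -/
theorem statement16 (Λ : Type) [Ring Λ] [StarRing Λ]
    (B : Type) [AddCommGroup B] [Module Λᵐᵒᵖ B] (s : SesqForm Λ B)
    (hs : s.IsHermitian) (hbij : Function.Bijective (rdualMap s.ad)) :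
    ∀ x y : B →ₗ[Λᵐᵒᵖ] Λ,
      star ((Function.invFun ⇑(rdualMap s.ad) y) x) =
        (Function.invFun ⇑(rdualMap s.ad) x) y := by
  intro x y
  let e := LinearEquiv.ofBijective (rdualMap s.ad) hbij
  have invFun_eq (v) : Function.invFun ⇑(rdualMap s.ad) v = e.symm v :=
    hbij.injective <| (Function.rightInverse_invFun hbij.surjective v).trans
      (e.apply_symm_apply v).symm
  have symm_ad (b : B) : e.symm (s.ad b) = rgamma Λ B b :=
    e.symm_apply_eq.mpr (hs.rdualMap_ad_rgamma b).symm
  have comp_symm : (rgamma Λ (B →ₗ[Λᵐᵒᵖ] Λ) x).comp e.symm.toLinearMap = e.symm x := by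
    refine e.eq_symm_apply.mpr (LinearMap.ext fun b => ?_)
    change star (e.symm (s.ad b) x) = x b
    rw [symm_ad]
    exact star_star (x b)
  rw [invFun_eq, invFun_eq, ← comp_symm]
  rfl
end

section
/- Let Λ be a ring with involution, B and F right Λ-modules, s a hermitian form on B such that (ad s)* : (B*)* → B* is bijective, and h the reduced form on B* defined by h(x, y) = ((ad s)*)^{-1}(x)(y). Let φ : F → B* be a Λ-linear map, define θ(x, x') = −h(φ(x), φ(x')) for x, x' ∈ F, and define f : B ⊕ F → B* by f(b, x) = (ad s)(b) + φ(x). Then the form s ⊕ θ vanishes identically on the kernel of f: for all (b, x), (b', x') ∈ ker f, s(b, b') + θ(x, x') = 0. -/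
/-- Let `Λ` be a ring with involution, `B`, `F` right `Λ`-modules, `s` a
hermitian form on `B` with `(ad s)*` bijective, and `h` the reduced form on `B*`. Let
`φ : F → B*`, let `θ(x, x') = −h(φ x, φ x')`, and let `f : B ⊕ F → B*` be
`f(b, x) = (ad s)(b) + φ(x)`. Then `s ⊕ θ` vanishes identically on `ker f`. -/
theorem statement18 (Λ : Type) [Ring Λ] [StarRing Λ]
    (B F : Type) [AddCommGroup B] [AddCommGroup F] [Module Λᵐᵒᵖ B] [Module Λᵐᵒᵖ F]
    (s : SesqForm Λ B) (hs : s.IsHermitian) (hbij : Function.Bijective (rdualMap s.ad))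
    (φ : F →ₗ[Λᵐᵒᵖ] (B →ₗ[Λᵐᵒᵖ] Λ)) (b b' : B) (x x' : F)
    (hmem : (b, x) ∈ LinearMap.ker
      (s.ad ∘ₗ LinearMap.fst Λᵐᵒᵖ B F + φ ∘ₗ LinearMap.snd Λᵐᵒᵖ B F))
    (hmem' : (b', x') ∈ LinearMap.ker
      (s.ad ∘ₗ LinearMap.fst Λᵐᵒᵖ B F + φ ∘ₗ LinearMap.snd Λᵐᵒᵖ B F)) :
    s.toFun b b' + -((Function.invFun ⇑(rdualMap s.ad) (φ x)) (φ x')) = 0 := by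
  have hx : s.ad b + φ x = 0 := hmem
  have hx' : s.ad b' + φ x' = 0 := hmem'
  have hinv : rdualMap s.ad (Function.invFun (rdualMap s.ad) (φ x)) = φ x :=
    Function.rightInverse_invFun hbij.surjective (φ x)
  have happ : Function.invFun (rdualMap s.ad) (φ x) (s.ad b') = φ x b' :=
    LinearMap.congr_fun hinv b'
  have hb : s.toFun b b' + φ x b' = 0 := LinearMap.congr_fun hx b'
  rw [eq_neg_of_add_eq_zero_right hx', map_neg, happ, neg_neg, hb]
end
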